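/- Let k be a field of prime characteristic p, let e ≥ 1 be an integer, let f ∈ k[x], and let J be an ideal of k[x] such that f^{p^e - 1} belongs to J^{[p^e]}, the ideal generated by the p^e-th powers of all elements of J. Then (f')^{p^e} belongs to J^{[p^e]}, where f' is the formal derivative of f. -/

import Mathlib

open Polynomial

/-! The operators `hasseDeriv n` with `n < q = p ^ e` are linear over `q`-th powers, because
`a(X + Y) ^ q = a(X) ^ q + Y ^ q * (⋯)` in characteristic `p`; hence they preserve every ideal
generated by `q`-th powers. On the other hand, comparing the coefficients of `Y ^ q` in
`f(X + Y) ^ q` gives `(f') ^ q = hasseDeriv q (f ^ q)`, and this equals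
`hasseDeriv (q - 1) (f ^ (q - 1) * f')`: the equality holds after multiplication by `q`, so it holds
over torsion-free semirings, and every commutative semiring is a quotient of one of these. -/

section HasseDeriv

variable {R : Type*}

theorem hasseDeriv_map [Semiring R] {S : Type*} [Semiring S] (φ : R →+* S) (n : ℕ) (f : R[X]) :
    hasseDeriv n (f.map φ) = (hasseDeriv n f).map φ := by
  ext i
  simp only [hasseDeriv_coeff, coeff_map, map_mul, map_natCast]

variable [CommSemiring R]

theorem coeff_taylor_X_map_C (f : R[X]) (n : ℕ) :
    (taylor X (f.map C)).coeff n = hasseDeriv n f := by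
  rw [taylor_coeff, hasseDeriv_map, eval_map, eval₂_C_X]

theorem hasseDeriv_pow_mul_derivative_of_isAddTorsionFree [IsAddTorsionFree R] (n : ℕ) (f : R[X]) :
    hasseDeriv n (f ^ n * derivative f) = hasseDeriv (n + 1) (f ^ (n + 1)) := by
  have nsmul_eq : (n + 1) • hasseDeriv n (f ^ n * derivative f) =
      (n + 1) • hasseDeriv (n + 1) (f ^ (n + 1)) := calc
    _ = hasseDeriv n (derivative (f ^ (n + 1))) := by
      rw [derivative_pow_succ, ← map_nsmul, mul_assoc, nsmul_eq_mul, map_add, map_natCast, map_one,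
        Nat.cast_succ]
    _ = (n + 1) • hasseDeriv (n + 1) (f ^ (n + 1)) := by
      rw [← hasseDeriv_one, ← LinearMap.comp_apply, hasseDeriv_comp, Nat.choose_succ_self_right,
        LinearMap.smul_apply]
  ext i
  apply nsmul_right_injective n.succ_ne_zero
  simpa only [coeff_smul] using congrArg (coeff · i) nsmul_eq

theorem hasseDeriv_pow_mul_derivative (n : ℕ) (f : R[X]) :
    hasseDeriv n (f ^ n * derivative f) = hasseDeriv (n + 1) (f ^ (n + 1)) := by
  obtain ⟨g, rfl⟩ := map_surjective _ (MvPolynomial.counitNat_surjective R) f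
  simp only [derivative_map, ← Polynomial.map_pow, ← Polynomial.map_mul, hasseDeriv_map,
    hasseDeriv_pow_mul_derivative_of_isAddTorsionFree]

end HasseDeriv

section FrobeniusPower

variable {R : Type*} [CommSemiring R] (p : ℕ) [ExpChar R p] (e : ℕ)

theorem hasseDeriv_pow_expChar_pow (n : ℕ) (f : R[X]) :
    hasseDeriv n (f ^ p ^ e) = if p ^ e ∣ n then hasseDeriv (n / p ^ e) f ^ p ^ e else 0 := by
  rw [← coeff_taylor_X_map_C, Polynomial.map_pow, taylor_pow, ← map_iterateFrobenius_expand,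
    coeff_map, coeff_expand (expChar_pow_pos R p e), apply_ite (iterateFrobenius R[X] p e),
    map_zero, iterateFrobenius_def, coeff_taylor_X_map_C]

theorem hasseDeriv_pow_expChar_pow_self (f : R[X]) :
    hasseDeriv (p ^ e) (f ^ p ^ e) = derivative f ^ p ^ e := by
  rw [hasseDeriv_pow_expChar_pow, if_pos dvd_rfl, Nat.div_self (expChar_pow_pos R p e),
    hasseDeriv_one]

theorem hasseDeriv_mem_span_image_pow (s : Set R[X]) {n : ℕ} (hn : n < p ^ e) {f : R[X]}
    (hf : f ∈ Ideal.span ((· ^ p ^ e) '' s)) :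
    hasseDeriv n f ∈ Ideal.span ((· ^ p ^ e) '' s) := by
  induction hf using Submodule.span_induction generalizing n with
  | mem g hg =>
    rcases n.eq_zero_or_pos with rfl | hpos
    · rw [hasseDeriv_zero']
      exact Ideal.subset_span hg
    · obtain ⟨a, -, rfl⟩ := hg
      simp only [hasseDeriv_pow_expChar_pow, if_neg (Nat.not_dvd_of_pos_of_lt hpos hn), zero_mem]
  | zero => simp only [map_zero, zero_mem]
  | add g h _ _ ihg ihh => simpa only [map_add] using add_mem (ihg hn) (ihh hn)
  | smul b g _ ih =>
    rw [smul_eq_mul, hasseDeriv_mul]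
    exact sum_mem fun ij hij ↦ Ideal.mul_mem_left _ _
      (ih ((Finset.HasAntidiagonal.antidiagonal.snd_le hij).trans_lt hn))

theorem deriv_pow_mem_frobenius_power_general (f : R[X]) (s : Set R[X])
    (hf : f ^ (p ^ e - 1) ∈ Ideal.span ((· ^ p ^ e) '' s)) :
    derivative f ^ p ^ e ∈ Ideal.span ((· ^ p ^ e) '' s) := by
  have hq : 0 < p ^ e := expChar_pow_pos R p e
  have derivative_pow_eq :
      derivative f ^ p ^ e = hasseDeriv (p ^ e - 1) (f ^ (p ^ e - 1) * derivative f) := by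
    rw [hasseDeriv_pow_mul_derivative, Nat.sub_add_cancel hq, hasseDeriv_pow_expChar_pow_self]
  rw [derivative_pow_eq]
  exact hasseDeriv_mem_span_image_pow p e s (Nat.sub_one_lt_of_lt hq) (Ideal.mul_mem_right _ _ hf)

end FrobeniusPower

/-- For a field `k` of prime characteristic `p`, `e ≥ 1`, `f ∈ k[x]` and an ideal `J` with
`f^{p^e-1} ∈ J^{[p^e]}` (the ideal generated by `p^e`-th powers of elements of `J`), we have
`(f')^{p^e} ∈ J^{[p^e]}`. -/
theorem deriv_pow_mem_frobenius_power (k : Type*) [Field k] (p : ℕ) [Fact p.Prime] [CharP k p]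
    (e : ℕ) (he : 1 ≤ e) (f : Polynomial k) (J : Ideal (Polynomial k))
    (hf : f ^ (p ^ e - 1) ∈ Ideal.span ((fun a => a ^ (p ^ e)) '' (J : Set (Polynomial k)))) :
    (derivative f) ^ (p ^ e) ∈
      Ideal.span ((fun a => a ^ (p ^ e)) '' (J : Set (Polynomial k))) := by
  have : ExpChar k p := ExpChar.prime Fact.out
  exact deriv_pow_mem_frobenius_power_general p e f J hf
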